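/- Bayes consistency of the binary two-temperature loss (Theorem 2): let 0 < t₁ < 2, 0 < t₂ < 2, and η ∈ (0,1), and define the optimal margin a* = log_{t₂}( η^{1/t₁} / (η^{1/t₁} + (1-η)^{1/t₁}) ) - log_{t₂}( (1-η)^{1/t₁} / (η^{1/t₁} + (1-η)^{1/t₁}) ). Then a* > 0 if and only if η > 1/2, a* < 0 if and only if η < 1/2, and a* = 0 if and only if η = 1/2; that is, sign(a*) = sign(η - 1/2), so the loss is classification-calibrated. -/

import Mathlib

/-- The tempered logarithm `log_t`: for `t ≠ 1` it is `(x^(1-t) - 1)/(1-t)`;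
for `t = 1` it is the natural logarithm. -/
noncomputable def tlog (t x : ℝ) : ℝ :=
  if t = 1 then Real.log x else (x ^ (1 - t) - 1) / (1 - t)

/-- The tempered logarithm is strictly increasing on the positive reals. -/
theorem tlog_strictMonoOn (t : ℝ) : StrictMonoOn (tlog t) (Set.Ioi 0) := by
  intro x hx y hy hxy
  rw [Set.mem_Ioi] at hx hy
  unfold tlog
  split_ifs with ht
  · exact Real.log_lt_log hx hxy
  · rcases lt_or_gt_of_ne ht with h | h
    · have h1 : 0 < 1 - t := by linarith
      have := Real.rpow_lt_rpow hx.le hxy h1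
      gcongr
    · have h1 : 1 - t < 0 := by linarith
      have := Real.rpow_lt_rpow_of_neg hx hxy h1
      exact div_lt_div_of_neg_of_lt h1 (by linarith)

/-- Bayes consistency of the binary two-temperature loss: the optimal margin
`a* = log_{t₂}(η^(1/t₁)/(η^(1/t₁)+(1-η)^(1/t₁))) -
      log_{t₂}((1-η)^(1/t₁)/(η^(1/t₁)+(1-η)^(1/t₁)))`
has the same sign as `η - 1/2`. -/
theorem binary_bayes_consistent (t₁ t₂ : ℝ) (ht₁0 : 0 < t₁) (ht₁2 : t₁ < 2)
    (ht₂0 : 0 < t₂) (ht₂2 : t₂ < 2) (η : ℝ) (hη0 : 0 < η) (hη1 : η < 1) :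
    (0 < tlog t₂ (η ^ (1 / t₁) / (η ^ (1 / t₁) + (1 - η) ^ (1 / t₁))) -
        tlog t₂ ((1 - η) ^ (1 / t₁) / (η ^ (1 / t₁) + (1 - η) ^ (1 / t₁))) ↔
      1 / 2 < η) ∧
    (tlog t₂ (η ^ (1 / t₁) / (η ^ (1 / t₁) + (1 - η) ^ (1 / t₁))) -
        tlog t₂ ((1 - η) ^ (1 / t₁) / (η ^ (1 / t₁) + (1 - η) ^ (1 / t₁))) < 0 ↔
      η < 1 / 2) ∧
    (tlog t₂ (η ^ (1 / t₁) / (η ^ (1 / t₁) + (1 - η) ^ (1 / t₁))) -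
        tlog t₂ ((1 - η) ^ (1 / t₁) / (η ^ (1 / t₁) + (1 - η) ^ (1 / t₁))) = 0 ↔
      η = 1 / 2) := by
  have hη : 0 < 1 - η := sub_pos.mpr hη1
  have hp : 0 < 1 / t₁ := one_div_pos.mpr ht₁0
  have ha : 0 < η ^ (1 / t₁) := Real.rpow_pos_of_pos hη0 _
  have hb : 0 < (1 - η) ^ (1 / t₁) := Real.rpow_pos_of_pos hη _
  have hs := add_pos ha hb
  have hu := div_pos ha hs
  have hv := div_pos hb hs
  have hlog := tlog_strictMonoOn t₂
  refine ⟨?_, ?_, ?_⟩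
  · rw [sub_pos, hlog.lt_iff_lt hv hu, div_lt_div_iff_of_pos_right hs,
      Real.rpow_lt_rpow_iff hη.le hη0.le hp]
    constructor <;> intro <;> linarith
  · rw [sub_neg, hlog.lt_iff_lt hu hv, div_lt_div_iff_of_pos_right hs,
      Real.rpow_lt_rpow_iff hη0.le hη.le hp]
    constructor <;> intro <;> linarith
  · rw [sub_eq_zero, hlog.injOn.eq_iff hu hv, div_left_inj' hs.ne',
      Real.rpow_left_inj hη0.le hη.le hp.ne']
    constructor <;> intro <;> linarith
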